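/- Suppose the coordinates u are normalized, B(u) satisfies the matching condition, and α = min{α_i : i ∈ J} < ∞. Then there exists a constant C > 0, depending only on the system, such that for any C^1 solution u = u(t,x) with |u| small, the source terms F̃_i and G̃_i of the divergence-form decomposition satisfy, for each i = 1,…,n: |F̃_i(t,x)| ≤ C [ Σ_{j≠k} |v_j w_k| + Σ_{j≠k} |v_j v_k| + |u_i|^α |v_i w_i| ] and |G̃_i(t,x)| ≤ C [ Σ_{j≠k} |v_j w_k| + Σ_{j≠k} |w_j w_k| ]. -/

import Mathlib

open scoped ENNReal
open MeasureTheory Matrix Set Filter Topology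

noncomputable section

/-- The state space `ℝⁿ`, realized as `Fin n → ℝ`. -/
abbrev V (n : ℕ) := Fin n → ℝ

/-- The Euclidean norm on `Fin n → ℝ`. -/
def eunorm {n : ℕ} (v : V n) : ℝ := Real.sqrt (∑ i, v i ^ 2)

/-- The `i`-th standard basis vector `e_i`. -/
def eb {n : ℕ} (i : Fin n) : V n := Pi.single i 1

/-- A first-order quasilinear strictly hyperbolic system
`∂u/∂t + A(u) ∂u/∂x = B(u)`, with suitably smooth coefficients on the
neighborhood `{|u| < δ}` of `u = 0`, real distinct eigenvalues
`λ_1(u) < ⋯ < λ_n(u)` and complete systems of left/right eigenvectors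
normalized by `l_i(u) r_j(u) ≡ δ_ij`, `r_i(u)ᵀ r_i(u) ≡ 1`. -/
structure HypSys (n : ℕ) where
  A : V n → Matrix (Fin n) (Fin n) ℝ
  B : V n → V n
  lam : Fin n → V n → ℝ
  l : Fin n → V n → V n
  r : Fin n → V n → V n
  δ : ℝ
  δ_pos : 0 < δ
  smooth_A : ∀ i j : Fin n, ContDiffOn ℝ (⊤ : ℕ∞) (fun u => A u i j) {u | eunorm u < δ}
  smooth_B : ContDiffOn ℝ (⊤ : ℕ∞) B {u | eunorm u < δ}
  smooth_lam : ∀ i : Fin n, ContDiffOn ℝ (⊤ : ℕ∞) (lam i) {u | eunorm u < δ}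
  smooth_l : ∀ i : Fin n, ContDiffOn ℝ (⊤ : ℕ∞) (l i) {u | eunorm u < δ}
  smooth_r : ∀ i : Fin n, ContDiffOn ℝ (⊤ : ℕ∞) (r i) {u | eunorm u < δ}
  strict_hyp : ∀ u : V n, eunorm u < δ → ∀ i j : Fin n, i < j → lam i u < lam j u
  eig_r : ∀ u : V n, eunorm u < δ → ∀ i, Matrix.mulVec (A u) (r i u) = lam i u • r i u
  eig_l : ∀ u : V n, eunorm u < δ → ∀ i, Matrix.vecMul (l i u) (A u) = lam i u • l i u
  norm_lr : ∀ u : V n, eunorm u < δ → ∀ i j : Fin n, l i u ⬝ᵥ r j u = if i = j then 1 else 0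
  norm_rr : ∀ u : V n, eunorm u < δ → ∀ i : Fin n, r i u ⬝ᵥ r i u = 1

namespace HypSys

variable {n : ℕ} (S : HypSys n)

/-- Normalized coordinates: `r_i(u_i e_i) ≡ e_i` for `|u_i|` small. -/
def Normalized : Prop := ∀ i : Fin n, ∀ s : ℝ, |s| < S.δ → S.r i (s • eb i) = eb i

/-- Matching condition for the inhomogeneous term: `B(u_i e_i) ≡ 0` for `|u_i|` small. -/
def Matching : Prop := ∀ i : Fin n, ∀ s : ℝ, |s| < S.δ → S.B (s • eb i) = 0

/-- In normalized coordinates, `∂^k λ_i / ∂u_i^k (0)`. -/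
def axisDeriv (i : Fin n) (k : ℕ) : ℝ := iteratedDeriv k (fun s : ℝ => S.lam i (s • eb i)) 0

/-- The `i`-th characteristic field is weakly linearly degenerate:
`λ_i(u_i e_i) ≡ λ_i(0)` for `|u_i|` small (in normalized coordinates). -/
def WLD (i : Fin n) : Prop := ∀ s : ℝ, |s| < S.δ → S.lam i (s • eb i) = S.lam i 0

/-- `α_i = a`: the derivatives `∂^k λ_i/∂u_i^k (0)` vanish for `k = 1, …, a`
but not for `k = a + 1`. -/
def IsAlphaOf (i : Fin n) (a : ℕ) : Prop :=
  (∀ k : ℕ, 1 ≤ k → k ≤ a → S.axisDeriv i k = 0) ∧ S.axisDeriv i (a + 1) ≠ 0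

/-- `a = α = min { α_i : i ∈ J } < ∞`, where `J` is the set of non weakly
linearly degenerate indices.  (In particular the system is not weakly
linearly degenerate.) -/
def IsMinAlpha (a : ℕ) : Prop :=
  (∃ i : Fin n, ¬ S.WLD i ∧ S.IsAlphaOf i a) ∧
    ∀ i : Fin n, ¬ S.WLD i → ∀ b : ℕ, S.IsAlphaOf i b → a ≤ b

/-- `b_i(u) = l_i(u) B(u)`. -/
def bcoef (i : Fin n) (u : V n) : ℝ := S.l i u ⬝ᵥ S.B u

/-- `β_{ijk}(u) = (λ_k(u) − λ_i(u)) l_i(u) ∇r_j(u) r_k(u)`. -/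
def beta (i j k : Fin n) (u : V n) : ℝ :=
  (S.lam k u - S.lam i u) * (S.l i u ⬝ᵥ fderiv ℝ (S.r j) u (S.r k u))

/-- `ν_{ijk}(u) = − l_i(u) ∇r_j(u) r_k(u)`. -/
def nu (i j k : Fin n) (u : V n) : ℝ := -(S.l i u ⬝ᵥ fderiv ℝ (S.r j) u (S.r k u))

/-- `γ_{ijk}(u) = (λ_k(u) − λ_j(u)) l_i(u) ∇r_j(u) r_k(u) − ∇λ_j(u) r_k(u) δ_ij`. -/
def gamma (i j k : Fin n) (u : V n) : ℝ :=
  (S.lam k u - S.lam j u) * (S.l i u ⬝ᵥ fderiv ℝ (S.r j) u (S.r k u)) -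
    (if i = j then fderiv ℝ (S.lam j) u (S.r k u) else 0)

/-- `σ_{ijk}(u) = l_i(u) (∇r_k(u) r_j(u) − ∇r_j(u) r_k(u))`. -/
def sigma (i j k : Fin n) (u : V n) : ℝ :=
  S.l i u ⬝ᵥ (fderiv ℝ (S.r k) u (S.r j u) - fderiv ℝ (S.r j) u (S.r k u))

/-- `β̃_{ijk}(u) = β_{ijk}(u) + ∇λ_i(u) r_k(u) δ_ij`. -/
def betaT (i j k : Fin n) (u : V n) : ℝ :=
  S.beta i j k u + (if i = j then fderiv ℝ (S.lam i) u (S.r k u) else 0)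

/-- `γ̃_{ijk}(u) = γ_{ijk}(u) + ½ [∇λ_j(u) r_k(u) δ_ij + ∇λ_k(u) r_j(u) δ_ik]`. -/
def gammaT (i j k : Fin n) (u : V n) : ℝ :=
  S.gamma i j k u + (1 / 2) *
    ((if i = j then fderiv ℝ (S.lam j) u (S.r k u) else 0) +
     (if i = k then fderiv ℝ (S.lam k) u (S.r j u) else 0))

/-- `b̃_{ik}(u) = Σ_l (∂b_i/∂u_l)(u) r_{kl}(u)`. -/
def btilde (i k : Fin n) (u : V n) : ℝ :=
  ∑ m : Fin n, fderiv ℝ (S.bcoef i) u (Pi.single m 1) * S.r k u m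

/-- `u` is a `C¹` solution of the Cauchy problem on `[0,T] × ℝ`, with initial
data `u0`, staying in the neighborhood `{|u| < δ}` of `u = 0`. -/
structure IsSolutionOn (u : ℝ → ℝ → V n) (u0 : ℝ → V n) (T : ℝ) : Prop where
  smooth : ContDiffOn ℝ 1 (fun p : ℝ × ℝ => u p.1 p.2) (Icc 0 T ×ˢ univ)
  small : ∀ t ∈ Icc (0 : ℝ) T, ∀ x : ℝ, eunorm (u t x) < S.δ
  pde : ∀ t ∈ Icc (0 : ℝ) T, ∀ x : ℝ,
    derivWithin (fun s => u s x) (Icc 0 T) t +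
      Matrix.mulVec (S.A (u t x)) (deriv (fun y => u t y) x) = S.B (u t x)
  init : ∀ x : ℝ, u 0 x = u0 x

/-- The lifespan `T̃` of the Cauchy problem with initial data `u0`
(as an extended nonnegative real). -/
def lifespan (u0 : ℝ → V n) : ℝ≥0∞ :=
  ⨆ (T : ℝ) (_ : ∃ u : ℝ → ℝ → V n, S.IsSolutionOn u u0 T), ENNReal.ofReal T

/-- `v_i = l_i(u) u`. -/
def vC (u : ℝ → ℝ → V n) (i : Fin n) (t x : ℝ) : ℝ := S.l i (u t x) ⬝ᵥ u t x

/-- `w_i = l_i(u) u_x`. -/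
def wC (u : ℝ → ℝ → V n) (i : Fin n) (t x : ℝ) : ℝ :=
  S.l i (u t x) ⬝ᵥ deriv (fun y => u t y) x

/-- `v = (v_1, …, v_n)`. -/
def vV (u : ℝ → ℝ → V n) (t x : ℝ) : V n := fun i => S.vC u i t x

/-- `w = (w_1, …, w_n)`. -/
def wV (u : ℝ → ℝ → V n) (t x : ℝ) : V n := fun i => S.wC u i t x

/-- `U_∞(T) = sup_{0≤t≤T} sup_x |u(t,x)|`. -/
def Uinf (_S : HypSys n) (u : ℝ → ℝ → V n) (T : ℝ) : ℝ :=
  ⨆ p : Icc (0 : ℝ) T × ℝ, eunorm (u p.1.1 p.2)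

/-- `V_∞(T) = sup_{0≤t≤T} sup_x |v(t,x)|`. -/
def Vinf (u : ℝ → ℝ → V n) (T : ℝ) : ℝ :=
  ⨆ p : Icc (0 : ℝ) T × ℝ, eunorm (S.vV u p.1.1 p.2)

/-- `W_∞(T) = sup_{0≤t≤T} sup_x |w(t,x)|`. -/
def Winf (u : ℝ → ℝ → V n) (T : ℝ) : ℝ :=
  ⨆ p : Icc (0 : ℝ) T × ℝ, eunorm (S.wV u p.1.1 p.2)

/-- `V_1(T) = sup_{0≤t≤T} ∫_ℝ |v(t,x)| dx`. -/
def V1 (u : ℝ → ℝ → V n) (T : ℝ) : ℝ :=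
  ⨆ t : Icc (0 : ℝ) T, ∫ x : ℝ, eunorm (S.vV u t.1 x)

/-- `W_1(T) = sup_{0≤t≤T} ∫_ℝ |w(t,x)| dx`. -/
def W1 (u : ℝ → ℝ → V n) (T : ℝ) : ℝ :=
  ⨆ t : Icc (0 : ℝ) T, ∫ x : ℝ, eunorm (S.wV u t.1 x)

/-- `ξ` is a `j`-th characteristic curve on `[0,T]`:  `ξ'(t) = λ_j(u(t, ξ(t)))`. -/
def IsChar (u : ℝ → ℝ → V n) (j : Fin n) (T : ℝ) (ξ : ℝ → ℝ) : Prop :=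
  ∀ t ∈ Icc (0 : ℝ) T, HasDerivWithinAt ξ (S.lam j (u t (ξ t))) (Icc 0 T) t

/-- `Ṽ_1(T) = max_{i≠j} sup_{C̃_j} ∫_{C̃_j} |v_i| dt`. -/
def V1t (u : ℝ → ℝ → V n) (T : ℝ) : ℝ :=
  sSup {A : ℝ | ∃ i j : Fin n, i ≠ j ∧ ∃ ξ : ℝ → ℝ, S.IsChar u j T ξ ∧
    A = ∫ t in Icc (0 : ℝ) T, |S.vC u i t (ξ t)|}

/-- `W̃_1(T) = max_{i≠j} sup_{C̃_j} ∫_{C̃_j} |w_i| dt`. -/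
def W1t (u : ℝ → ℝ → V n) (T : ℝ) : ℝ :=
  sSup {A : ℝ | ∃ i j : Fin n, i ≠ j ∧ ∃ ξ : ℝ → ℝ, S.IsChar u j T ξ ∧
    A = ∫ t in Icc (0 : ℝ) T, |S.wC u i t (ξ t)|}

/-- `Q_W(T) = Σ_{j≠k} ∫∫ |w_j||w_k|`. -/
def QW (u : ℝ → ℝ → V n) (T : ℝ) : ℝ :=
  ∑ j : Fin n, ∑ k : Fin n, if j = k then 0 else
    ∫ t in Icc (0 : ℝ) T, ∫ x : ℝ, |S.wC u j t x| * |S.wC u k t x|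

/-- `Q_{VW}(T) = Σ_{j≠k} ∫∫ |v_j||w_k|`. -/
def QVW (u : ℝ → ℝ → V n) (T : ℝ) : ℝ :=
  ∑ j : Fin n, ∑ k : Fin n, if j = k then 0 else
    ∫ t in Icc (0 : ℝ) T, ∫ x : ℝ, |S.vC u j t x| * |S.wC u k t x|

/-- `Q_V(T) = Σ_{j≠k} ∫∫ |v_j||v_k|`. -/
def QV (u : ℝ → ℝ → V n) (T : ℝ) : ℝ :=
  ∑ j : Fin n, ∑ k : Fin n, if j = k then 0 else
    ∫ t in Icc (0 : ℝ) T, ∫ x : ℝ, |S.vC u j t x| * |S.vC u k t x|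

/-- The coefficient `a_0(t;i,y) = γ_{iii}(u)` of the Riccati equation (5.5),
evaluated at `(t,x)`. -/
def ricA0 (u : ℝ → ℝ → V n) (i : Fin n) (t x : ℝ) : ℝ := S.gamma i i i (u t x)

/-- The coefficient `a_1(t;i,y)` of the Riccati equation (5.5), evaluated at `(t,x)`. -/
def ricA1 (u : ℝ → ℝ → V n) (i : Fin n) (t x : ℝ) : ℝ :=
  (∑ j : Fin n, if j = i then 0 else
      (S.gamma i i j (u t x) + S.gamma i j i (u t x)) * S.wC u j t x)
  + (∑ j : Fin n, S.sigma i j i (u t x) * S.bcoef j (u t x))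
  + (S.btilde i i (u t x) - S.btilde i i ((u t x i) • eb i))

/-- The coefficient `a_2(t;i,y)` of the Riccati equation (5.5), evaluated at `(t,x)`. -/
def ricA2 (u : ℝ → ℝ → V n) (i : Fin n) (t x : ℝ) : ℝ :=
  (∑ j : Fin n, ∑ k : Fin n, if j = k ∨ j = i ∨ k = i then 0 else
      S.gamma i j k (u t x) * S.wC u j t x * S.wC u k t x)
  + (∑ j : Fin n, ∑ k : Fin n, if k = i then 0 else
      S.sigma i j k (u t x) * S.bcoef j (u t x) * S.wC u k t x)
  + (∑ k : Fin n, if k = i then 0 else S.btilde i k (u t x) * S.wC u k t x)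

/-- `u` is a `C¹` solution of the system on the open set `Ω`, with values in
the neighborhood `{|u| < δ}`. -/
structure IsSol1On (u : ℝ → ℝ → V n) (Ω : Set (ℝ × ℝ)) : Prop where
  isOpen : IsOpen Ω
  smooth : ContDiffOn ℝ 1 (fun p : ℝ × ℝ => u p.1 p.2) Ω
  small : ∀ p ∈ Ω, eunorm (u p.1 p.2) < S.δ
  pde : ∀ p ∈ Ω, deriv (fun s => u s p.2) p.1 +
    Matrix.mulVec (S.A (u p.1 p.2)) (deriv (fun y => u p.1 y) p.2) = S.B (u p.1 p.2)

/-- `u` is a `C²` solution of the system on the open set `Ω`, with values in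
the neighborhood `{|u| < δ}`. -/
structure IsSol2On (u : ℝ → ℝ → V n) (Ω : Set (ℝ × ℝ)) : Prop where
  isOpen : IsOpen Ω
  smooth : ContDiffOn ℝ 2 (fun p : ℝ × ℝ => u p.1 p.2) Ω
  small : ∀ p ∈ Ω, eunorm (u p.1 p.2) < S.δ
  pde : ∀ p ∈ Ω, deriv (fun s => u s p.2) p.1 +
    Matrix.mulVec (S.A (u p.1 p.2)) (deriv (fun y => u p.1 y) p.2) = S.B (u p.1 p.2)

end HypSys

/-- The family of initial data `u(0,x) = f(ε,x)`: `f` is `C¹` in `(ε,x)`,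
`f(0,x) ≡ 0`, `∂²f/∂ε∂x(·,x)` is uniformly `C^r` (Hölder) on `[0,ε₁]`,
`ψ(x) = ∂f/∂ε(0,x)` is `C¹`, and `M = sup_x |ψ'(x)| < ∞`. -/
structure InitData (n : ℕ) where
  f : ℝ → ℝ → V n
  ε₁ : ℝ
  ε₁_pos : 0 < ε₁
  rexp : ℝ
  rexp_pos : 0 < rexp
  rexp_le_one : rexp ≤ 1
  smooth : ContDiff ℝ 1 (fun p : ℝ × ℝ => f p.1 p.2)
  zero : ∀ x : ℝ, f 0 x = 0
  psi_smooth : ContDiff ℝ 1 (fun x : ℝ => deriv (fun e => f e x) 0)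
  M_bdd : BddAbove (Set.range fun x : ℝ =>
    eunorm (deriv (fun x' : ℝ => deriv (fun e => f e x') 0) x))
  holder : ∃ CH : ℝ, ∀ x ε ε' : ℝ, ε ∈ Set.Icc 0 ε₁ → ε' ∈ Set.Icc 0 ε₁ →
    eunorm (deriv (fun e => deriv (fun y => f e y) x) ε
      - deriv (fun e => deriv (fun y => f e y) x) ε') ≤ CH * |ε - ε'| ^ rexp

namespace InitData

variable {n : ℕ} (D : InitData n)

/-- `ψ(x) = ∂f/∂ε(0,x)`. -/
def psi : ℝ → V n := fun x => deriv (fun e => D.f e x) 0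

/-- `M = sup_x |ψ'(x)|`. -/
def M : ℝ := ⨆ x : ℝ, eunorm (deriv D.psi x)

/-- The smallness conditions (1.17) on the initial data:
`∫|∂f/∂x(ε,·)| ≤ K₁ ε` and `∫|f(ε,·)| ≤ K₂ ε / (M+1)`. -/
def Small (K1 K2 ε : ℝ) : Prop :=
  Integrable (fun x : ℝ => eunorm (deriv (fun y => D.f ε y) x)) ∧
  Integrable (fun x : ℝ => eunorm (D.f ε x)) ∧
  (∫ x : ℝ, eunorm (deriv (fun y => D.f ε y) x)) ≤ K1 * ε ∧
  (∫ x : ℝ, eunorm (D.f ε x)) ≤ K2 / (D.M + 1) * ε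

end InitData

/-- The right-hand side of the sharp lifespan formula (1.26):
`max_{i∈J₁} sup_{x∈ℝ} ( −(1/α!) ∂^{α+1}λ_i/∂u_i^{α+1}(0) ψ_i(x)^α ψ_i'(x) )`. -/
def blowRate {n : ℕ} (S : HypSys n) (D : InitData n) (a : ℕ) : ℝ :=
  ⨆ i : {i : Fin n // ¬ S.WLD i ∧ S.IsAlphaOf i a}, ⨆ x : ℝ,
    (-(1 / (Nat.factorial a : ℝ)) * S.axisDeriv i.1 (a + 1) * (D.psi x) i.1 ^ a *
      deriv (fun x' => (D.psi x') i.1) x)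

/-!
Write `v = eigenCoord u u` and `w = eigenCoord u p` for the coordinates of the state `u` and of the
slope `p = u_x` in the eigenbasis at `u`. Every coefficient that accompanies a product of a family
`j` with itself vanishes on the `j`-th coordinate axis: normalization makes `r_j` constant there,
and matching kills every `b_k` there. A smooth function vanishing on the `j`-th axis is bounded by
the distance to it, and that distance is controlled by the `v_k` with `k ≠ j`, so each of these
terms is bounded by products of different families. Since `b_i` vanishes on all axes, its gradient
vanishes at `0`, which gives the stronger quadratic bound `∑_{j≠k} |v_j v_k|`. The only surviving
self-interaction is `β̃_iii v_i w_i`: on the `i`-th axis `β̃_iii` is the derivative of `λ_i` along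
the axis, which is `O(|u_i|^α)` by the definition of `α`.

The estimates are stated along the filter `𝓝 0 ×ˢ ⊤` on pairs `(u, p)`: the state tends to `0` while
the slope is arbitrary, so the constants are uniform in `u_x`.
-/

open Asymptotics
open scoped ContDiff

section Asymptotics

variable {X ι E F G : Type*} [NormedAddCommGroup E] [NormedAddCommGroup F] [NormedAddCommGroup G]

theorem isBigO_sum_smul [NormedSpace ℝ E] [Fintype ι] {l : Filter X} {c : X → ι → ℝ}
    {e : ι → X → E} (he : ∀ k, e k =O[l] fun _ => (1 : ℝ)) :
    (fun x => ∑ k, c x k • e k x) =O[l] c :=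
  IsBigO.fun_sum fun k _ => by
    simpa using (isBigO_pi.1 (isBigO_refl c l) k).norm_right.smul (he k)

theorem eventually_forall_norm_le_of_isBigO [Finite ι] {l : Filter X} {f : ι → X → E}
    {g : ι → X → F} (h : ∀ i, f i =O[l] g i) :
    ∀ᶠ C in atTop, ∀ᶠ x in l, ∀ i, ‖f i x‖ ≤ C * ‖g i x‖ :=
  (eventually_all.2 fun i => isBigO_iff_eventually.1 (h i)).mono fun _ hC => eventually_all.2 hC

theorem isBigO_of_forall_isBigO_of_exists_norm_le [Finite ι] {l : Filter X} {f : X → E}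
    {g : ι → X → F} {h : X → G} (hf : ∀ j, f =O[l] g j) (hg : ∀ x, ∃ j, ‖g j x‖ ≤ ‖h x‖) :
    f =O[l] h := by
  obtain ⟨C, hC, hC0⟩ :=
    ((eventually_forall_norm_le_of_isBigO hf).and (eventually_ge_atTop 0)).exists
  refine IsBigO.of_bound C (hC.mono fun x hx => ?_)
  obtain ⟨j, hj⟩ := hg x
  exact (hx j).trans (mul_le_mul_of_nonneg_left hj hC0)

theorem isBigO_one_comp_fst {Y : Type*} [TopologicalSpace X] {f : X → E} {x : X}
    (hf : ContinuousAt f x) (l : Filter Y) :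
    (fun q : X × Y => f q.1) =O[𝓝 x ×ˢ l] fun _ => (1 : ℝ) :=
  (hf.tendsto.comp tendsto_fst).isBigO_one ℝ

theorem isBigO_add_of_nonneg {l : Filter X} {f₁ f₂ : X → E} {g₁ g₂ : X → ℝ}
    (h₁ : f₁ =O[l] g₁) (h₂ : f₂ =O[l] g₂) (hg₁ : ∀ x, 0 ≤ g₁ x) (hg₂ : ∀ x, 0 ≤ g₂ x) :
    (fun x => f₁ x + f₂ x) =O[l] fun x => g₁ x + g₂ x := by
  simpa only [Real.norm_of_nonneg (hg₁ _), Real.norm_of_nonneg (hg₂ _)] using h₁.add_add h₂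

end Asymptotics

section Calculus

variable {E F : Type*} [NormedAddCommGroup E] [NormedSpace ℝ E]
  [NormedAddCommGroup F] [NormedSpace ℝ F]

theorem isBigO_sub_pow_of_iteratedDeriv_eq_zero {f : ℝ → E} {x₀ : ℝ} {a : ℕ}
    (hf : ContDiffAt ℝ a f x₀) (h0 : ∀ k < a, iteratedDeriv k f x₀ = 0) :
    f =O[𝓝 x₀] fun x => (x - x₀) ^ a := by
  obtain ⟨ε, hε, hball⟩ := Metric.eventually_nhds_iff_ball.1 (hf.eventually (by simp))
  have hx₀ : x₀ ∈ Metric.ball x₀ ε := Metric.mem_ball_self hε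
  have hderiv : ∀ k, iteratedDerivWithin k f (Metric.ball x₀ ε) x₀ = iteratedDeriv k f x₀ :=
    fun k => iteratedDerivWithin_of_isOpen Metric.isOpen_ball hx₀
  have htaylor : ∀ x, taylorWithinEval f a (Metric.ball x₀ ε) x₀ x =
      ((a.factorial : ℝ)⁻¹ * (x - x₀) ^ a) • iteratedDeriv a f x₀ := fun x => by
    rw [taylor_within_apply, Finset.sum_range_succ, Finset.sum_eq_zero, zero_add, hderiv]
    intro k hk
    rw [hderiv, h0 k (Finset.mem_range.1 hk), smul_zero]
  have hrem := taylor_isLittleO (convex_ball x₀ ε) hx₀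
    fun y hy => (hball y hy).contDiffWithinAt
  rw [nhdsWithin_eq_nhds.2 (Metric.ball_mem_nhds x₀ hε)] at hrem
  have hmain : (fun x => taylorWithinEval f a (Metric.ball x₀ ε) x₀ x) =O[𝓝 x₀]
      fun x => (x - x₀) ^ a := by
    simp only [htaylor]
    simpa using ((isBigO_refl (fun x => (x - x₀) ^ a) (𝓝 x₀)).const_mul_left _).smul
      (isBigO_const_const (iteratedDeriv a f x₀) (one_ne_zero (α := ℝ)) (𝓝 x₀))
  simpa using hrem.isBigO.add hmain

theorem eventually_differentiableAt_of_contDiffAt {f : E → F} {x : E} (hf : ContDiffAt ℝ 1 f x) :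
    ∀ᶠ y in 𝓝 x, DifferentiableAt ℝ f y :=
  (hf.eventually (by simp)).mono fun _ hy => hy.differentiableAt one_ne_zero

theorem isBigO_sub_of_fderiv_eq_zero {f : E → F} {x : E} (hf : ContDiffAt ℝ 2 f x)
    (h0 : fderiv ℝ f x = 0) :
    (fun p : E × E => f p.1 - f p.2) =O[𝓝 (x, x)] fun p => ‖p - (x, x)‖ * ‖p.1 - p.2‖ := by
  have hderiv : fderiv ℝ f =O[𝓝 x] fun y => y - x := by
    simpa [h0] using ((hf.fderiv_right (m := 1) (by norm_num)).differentiableAt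
      one_ne_zero).isBigO_sub
  obtain ⟨C, hC, hbound⟩ := hderiv.exists_nonneg
  obtain ⟨ε, hε, hball⟩ := Metric.eventually_nhds_iff_ball.1
    (hbound.bound.and (eventually_differentiableAt_of_contDiffAt (hf.of_le (by norm_num))))
  refine IsBigO.of_bound C ?_
  filter_upwards [Metric.ball_mem_nhds (x, x) hε] with p hp
  have hsub : Metric.closedBall x ‖p - (x, x)‖ ⊆ Metric.ball x ε :=
    Metric.closedBall_subset_ball (by simpa [dist_eq_norm] using hp)
  have hmvt := (convex_closedBall x ‖p - (x, x)‖).norm_image_sub_le_of_norm_fderiv_le (𝕜 := ℝ)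
    (f := f) (x := p.2) (y := p.1) (C := C * ‖p - (x, x)‖)
    (fun y hy => (hball y (hsub hy)).2)
    (fun y hy => (hball y (hsub hy)).1.trans (by gcongr; simpa [dist_eq_norm] using hy))
    (by simpa [dist_eq_norm] using norm_snd_le (p - (x, x)))
    (by simpa [dist_eq_norm] using norm_fst_le (p - (x, x)))
  simpa [mul_assoc] using hmvt

theorem tendsto_smul_const_zero (v : E) : Tendsto (fun s : ℝ => s • v) (𝓝 0) (𝓝 0) :=
  (continuous_id.smul continuous_const).tendsto' 0 0 (zero_smul ℝ v)

theorem fderiv_apply_eq_deriv_smul {f : E → F} {v : E} {s : ℝ}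
    (hf : DifferentiableAt ℝ f (s • v)) :
    fderiv ℝ f (s • v) v = deriv (fun t : ℝ => f (t • v)) s := by
  have hline : HasDerivAt (fun t : ℝ => t • v) v s := by
    simpa using (hasDerivAt_id s).smul_const v
  exact (hf.hasFDerivAt.comp_hasDerivAt s hline).deriv.symm

theorem fderiv_apply_eventually_eq_zero {f : E → F} {v : E} {c : F} (hf : ContDiffAt ℝ 1 f 0)
    (hc : ∀ᶠ s : ℝ in 𝓝 0, f (s • v) = c) :
    ∀ᶠ s : ℝ in 𝓝 0, fderiv ℝ f (s • v) v = 0 := by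
  filter_upwards [hc.eventually_nhds, (tendsto_smul_const_zero v).eventually
    (eventually_differentiableAt_of_contDiffAt hf)] with s hs hdiff
  rw [fderiv_apply_eq_deriv_smul hdiff, EventuallyEq.deriv_eq (f := fun _ => c) hs, deriv_const]

theorem contDiffAt_dotProduct {ι : Type*} [Fintype ι] {m : ℕ∞ω} {f g : E → ι → ℝ} {x : E}
    (hf : ContDiffAt ℝ m f x) (hg : ContDiffAt ℝ m g x) :
    ContDiffAt ℝ m (fun y => f y ⬝ᵥ g y) x :=
  ContDiffAt.sum fun k _ => (contDiffAt_pi.1 hf k).mul (contDiffAt_pi.1 hg k)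

theorem contDiffAt_fderiv_apply {m m' : ℕ∞ω} {f : E → F} {g : E → E} {x : E}
    (hf : ContDiffAt ℝ m' f x) (hg : ContDiffAt ℝ m g x) (hm : m + 1 ≤ m') :
    ContDiffAt ℝ m (fun y => fderiv ℝ f y (g y)) x :=
  (hf.fderiv_right hm).clm_apply hg

theorem contDiffAt_ite_zero {m : ℕ∞ω} (p : Prop) [Decidable p] {f : E → F} {x : E}
    (hf : ContDiffAt ℝ m f x) : ContDiffAt ℝ m (fun y => if p then f y else 0) x := by
  split_ifs
  exacts [hf, contDiffAt_const]

end Calculus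

section Axes

variable {n : ℕ} {E : Type*} [NormedAddCommGroup E] [NormedSpace ℝ E]

theorem norm_le_eunorm (u : V n) : ‖u‖ ≤ eunorm u :=
  (pi_norm_le_iff_of_nonneg (Real.sqrt_nonneg _)).2 fun k =>
    Real.abs_le_sqrt (Finset.single_le_sum (f := fun i => u i ^ 2)
      (fun _ _ => sq_nonneg _) (Finset.mem_univ k))

theorem continuous_eunorm : Continuous (eunorm : V n → ℝ) := by
  unfold eunorm
  fun_prop

theorem exists_pos_forall_of_eventually_nhds_zero_prod_top {P : V n × V n → Prop}
    (h : ∀ᶠ q in 𝓝 0 ×ˢ ⊤, P q) : ∃ ε > 0, ∀ u p : V n, eunorm u < ε → P (u, p) := by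
  rw [prod_top, eventually_comap] at h
  obtain ⟨ε, hε, hball⟩ := Metric.eventually_nhds_iff_ball.1 h
  exact ⟨ε, hε, fun u p hu =>
    hball u (mem_ball_zero_iff.2 ((norm_le_eunorm u).trans_lt hu)) (u, p) rfl⟩

/-- The projection `u ↦ u - u_j e_j` killing the `j`-th coordinate; its norm measures the
distance to the `j`-th axis. -/
def offAxis (j : Fin n) : V n →L[ℝ] V n :=
  .id ℝ (V n) - (ContinuousLinearMap.proj j).smulRight (eb j)

theorem offAxis_apply (j : Fin n) (u : V n) : offAxis j u = u - u j • eb j := rfl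

theorem offAxis_apply_self (j : Fin n) (u : V n) : offAxis j u j = 0 := by
  simp [offAxis_apply, eb]

theorem offAxis_apply_of_ne {j k : Fin n} (h : k ≠ j) (u : V n) : offAxis j u k = u k := by
  simp [offAxis_apply, eb, h]

theorem offAxis_eb (j : Fin n) : offAxis j (eb j) = 0 := by
  simp [offAxis_apply, eb]

theorem tendsto_apply_zero (j : Fin n) : Tendsto (fun u : V n => u j) (𝓝 0) (𝓝 0) :=
  (continuous_apply j).tendsto' 0 0 rfl

theorem tendsto_prodMk_axis (j : Fin n) :
    Tendsto (fun u : V n => (u, u j • eb j)) (𝓝 0) (𝓝 ((0 : V n), (0 : V n))) :=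
  tendsto_id.prodMk_nhds ((tendsto_smul_const_zero (eb j)).comp (tendsto_apply_zero j))

theorem norm_apply_smul_eb_le (j : Fin n) (u : V n) : ‖u j • (eb j : V n)‖ ≤ ‖u‖ := by
  simpa [norm_smul, eb, Pi.norm_single] using norm_le_pi_norm u j

theorem isBigO_sub_axis {g : V n → E} (hg : ContDiffAt ℝ 1 g 0) (j : Fin n) :
    (fun u => g u - g (u j • eb j)) =O[𝓝 0] offAxis j :=
  (hg.hasStrictFDerivAt one_ne_zero).isBigO_sub.comp_tendsto (tendsto_prodMk_axis j)

theorem isBigO_offAxis_of_axis_eq_zero {g : V n → E} {j : Fin n} (hg : ContDiffAt ℝ 1 g 0)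
    (h0 : ∀ᶠ s : ℝ in 𝓝 0, g (s • eb j) = 0) : g =O[𝓝 0] offAxis j :=
  (isBigO_sub_axis hg j).congr'
    ((tendsto_apply_zero j).eventually h0 |>.mono fun u hu => by simp [hu]) .rfl

theorem fderiv_eq_zero_of_axis_eq_zero {f : V n → E} (hf : ContDiffAt ℝ 1 f 0)
    (h0 : ∀ j : Fin n, ∀ᶠ s : ℝ in 𝓝 0, f (s • eb j) = 0) : fderiv ℝ f 0 = 0 := by
  refine ContinuousLinearMap.coe_injective (LinearMap.pi_ext' fun j => LinearMap.ext_ring ?_)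
  simpa [eb] using (fderiv_apply_eventually_eq_zero hf (h0 j)).self_of_nhds

theorem isBigO_norm_mul_offAxis_of_axis_eq_zero {f : V n → E} (hf : ContDiffAt ℝ 2 f 0)
    (h0 : ∀ j : Fin n, ∀ᶠ s : ℝ in 𝓝 0, f (s • eb j) = 0) (j : Fin n) :
    f =O[𝓝 0] fun u => ‖u‖ * ‖offAxis j u‖ := by
  have hfderiv := fderiv_eq_zero_of_axis_eq_zero (hf.of_le (by norm_num)) h0
  refine ((isBigO_sub_of_fderiv_eq_zero hf hfderiv).comp_tendsto (tendsto_prodMk_axis j)).congr'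
    ?_ (.of_eq (funext fun u => ?_))
  · filter_upwards [(tendsto_apply_zero j).eventually (h0 j)] with u hu
    simp [hu]
  · simp [Prod.norm_def, norm_apply_smul_eb_le, offAxis_apply]

/-- The sum `∑_{j≠k} |x_j y_k|` of interactions between different families. -/
def offDiagSum (x y : V n) : ℝ := ∑ j, ∑ k, if j = k then 0 else |x j * y k|

theorem offDiagSum_nonneg (x y : V n) : 0 ≤ offDiagSum x y :=
  Finset.sum_nonneg fun j _ => Finset.sum_nonneg fun k _ => by split_ifs <;> positivity

theorem abs_mul_le_offDiagSum {j k : Fin n} (h : j ≠ k) (x y : V n) :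
    |x j * y k| ≤ offDiagSum x y := by
  have hnonneg : ∀ j k, 0 ≤ if j = k then 0 else |x j * y k| := fun j k => by
    split_ifs <;> positivity
  calc |x j * y k| = if j = k then 0 else |x j * y k| := (if_neg h).symm
    _ ≤ ∑ k, if j = k then 0 else |x j * y k| :=
      Finset.single_le_sum (fun k _ => hnonneg j k) (Finset.mem_univ k)
    _ ≤ offDiagSum x y := Finset.single_le_sum (f := fun j => ∑ k, if j = k then 0 else _)
      (fun j _ => Finset.sum_nonneg fun k _ => hnonneg j k) (Finset.mem_univ j)

theorem norm_offAxis_mul_abs_le_offDiagSum (j : Fin n) (x y : V n) :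
    ‖offAxis j x‖ * |y j| ≤ offDiagSum x y := by
  rw [mul_comm, ← Real.norm_eq_abs, ← norm_smul, pi_norm_le_iff_of_nonneg (offDiagSum_nonneg x y)]
  intro k
  rcases eq_or_ne k j with rfl | hk
  · simpa [offAxis_apply_self] using offDiagSum_nonneg x y
  · simpa [offAxis_apply_of_ne hk, mul_comm] using abs_mul_le_offDiagSum hk x y

theorem exists_norm_mul_norm_offAxis_le_offDiagSum [Nonempty (Fin n)] (x : V n) :
    ∃ j, ‖x‖ * ‖offAxis j x‖ ≤ offDiagSum x x := by
  obtain ⟨j, hj⟩ := Finite.exists_max fun j => |x j|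
  have hnorm : ‖x‖ ≤ |x j| := (pi_norm_le_iff_of_nonneg (abs_nonneg _)).2 hj
  exact ⟨j, (mul_comm _ _).trans_le ((mul_le_mul_of_nonneg_left hnorm (norm_nonneg _)).trans
    (norm_offAxis_mul_abs_le_offDiagSum j x x))⟩

variable {X : Type*} {l : Filter X} {c : X → ℝ} {x y : X → V n} {j k : Fin n}

theorem isBigO_offDiagSum_of_ne (hc : c =O[l] fun _ => (1 : ℝ)) (hjk : j ≠ k) :
    (fun q => c q * x q j * y q k) =O[l] fun q => offDiagSum (x q) (y q) := by
  have hxy : (fun q => x q j * y q k) =O[l] fun q => offDiagSum (x q) (y q) :=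
    isBigO_of_le _ fun q => (abs_mul_le_offDiagSum hjk _ _).trans (Real.le_norm_self _)
  simpa [mul_assoc] using hc.mul hxy

theorem isBigO_offDiagSum_of_isBigO_offAxis (hc : c =O[l] fun q => offAxis j (x q)) :
    (fun q => c q * y q j) =O[l] fun q => offDiagSum (x q) (y q) :=
  (hc.norm_right.mul (isBigO_refl (fun q => y q j) l)).trans <| isBigO_of_le _ fun q => by
    simpa [Real.norm_of_nonneg (offDiagSum_nonneg _ _)] using
      norm_offAxis_mul_abs_le_offDiagSum j (x q) (y q)

end Axes

namespace HypSys

section Smoothness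

variable {n : ℕ} (S : HypSys n) {u : V n}

theorem domain_mem_nhds (hu : eunorm u < S.δ) : {u | eunorm u < S.δ} ∈ 𝓝 u :=
  (isOpen_lt continuous_eunorm continuous_const).mem_nhds hu

theorem eunorm_zero_lt : eunorm (0 : V n) < S.δ := by
  simpa [eunorm] using S.δ_pos

theorem eventually_abs_lt : ∀ᶠ s : ℝ in 𝓝 0, |s| < S.δ :=
  (continuous_abs.tendsto' 0 0 abs_zero).eventually_lt_const S.δ_pos

variable {S}

theorem contDiffAt_lam (hu : eunorm u < S.δ) (i : Fin n) : ContDiffAt ℝ ∞ (S.lam i) u :=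
  (S.smooth_lam i).contDiffAt (S.domain_mem_nhds hu)

theorem contDiffAt_l (hu : eunorm u < S.δ) (i : Fin n) : ContDiffAt ℝ ∞ (S.l i) u :=
  (S.smooth_l i).contDiffAt (S.domain_mem_nhds hu)

theorem contDiffAt_r (hu : eunorm u < S.δ) (i : Fin n) : ContDiffAt ℝ ∞ (S.r i) u :=
  (S.smooth_r i).contDiffAt (S.domain_mem_nhds hu)

theorem contDiffAt_bcoef (hu : eunorm u < S.δ) (i : Fin n) : ContDiffAt ℝ ∞ (S.bcoef i) u :=
  contDiffAt_dotProduct (contDiffAt_l hu i) (S.smooth_B.contDiffAt (S.domain_mem_nhds hu))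

theorem contDiffAt_fderiv_r (hu : eunorm u < S.δ) (j k : Fin n) :
    ContDiffAt ℝ ∞ (fun u => fderiv ℝ (S.r j) u (S.r k u)) u :=
  contDiffAt_fderiv_apply (contDiffAt_r hu j) (contDiffAt_r hu k) le_rfl

theorem contDiffAt_fderiv_lam (hu : eunorm u < S.δ) (j k : Fin n) :
    ContDiffAt ℝ ∞ (fun u => fderiv ℝ (S.lam j) u (S.r k u)) u :=
  contDiffAt_fderiv_apply (contDiffAt_lam hu j) (contDiffAt_r hu k) le_rfl

theorem contDiffAt_fderiv_bcoef (hu : eunorm u < S.δ) (i k : Fin n) :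
    ContDiffAt ℝ ∞ (fun u => fderiv ℝ (S.bcoef i) u (S.r k u)) u :=
  contDiffAt_fderiv_apply (contDiffAt_bcoef hu i) (contDiffAt_r hu k) le_rfl

theorem contDiffAt_nu (hu : eunorm u < S.δ) (i j k : Fin n) : ContDiffAt ℝ ∞ (S.nu i j k) u :=
  (contDiffAt_dotProduct (contDiffAt_l hu i) (contDiffAt_fderiv_r hu j k)).neg

theorem contDiffAt_sigma (hu : eunorm u < S.δ) (i j k : Fin n) :
    ContDiffAt ℝ ∞ (S.sigma i j k) u :=
  contDiffAt_dotProduct (contDiffAt_l hu i)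
    ((contDiffAt_fderiv_r hu k j).sub (contDiffAt_fderiv_r hu j k))

theorem contDiffAt_betaT (hu : eunorm u < S.δ) (i j k : Fin n) :
    ContDiffAt ℝ ∞ (S.betaT i j k) u :=
  (((contDiffAt_lam hu k).sub (contDiffAt_lam hu i)).mul
    (contDiffAt_dotProduct (contDiffAt_l hu i) (contDiffAt_fderiv_r hu j k))).add
    (contDiffAt_ite_zero (i = j) (contDiffAt_fderiv_lam hu i k))

theorem contDiffAt_gammaT (hu : eunorm u < S.δ) (i j k : Fin n) :
    ContDiffAt ℝ ∞ (S.gammaT i j k) u :=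
  ((((contDiffAt_lam hu k).sub (contDiffAt_lam hu j)).mul
    (contDiffAt_dotProduct (contDiffAt_l hu i) (contDiffAt_fderiv_r hu j k))).sub
    (contDiffAt_ite_zero (i = j) (contDiffAt_fderiv_lam hu j k))).add
    (contDiffAt_const.mul ((contDiffAt_ite_zero (i = j) (contDiffAt_fderiv_lam hu j k)).add
      (contDiffAt_ite_zero (i = k) (contDiffAt_fderiv_lam hu k j))))

theorem IsSol1On.deriv_bcoef {u : ℝ → ℝ → V n} {Ω : Set (ℝ × ℝ)} (hu : S.IsSol1On u Ω)
    (i : Fin n) {p : ℝ × ℝ} (hp : p ∈ Ω) :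
    deriv (fun y => S.bcoef i (u p.1 y)) p.2 =
      fderiv ℝ (S.bcoef i) (u p.1 p.2) (deriv (fun y => u p.1 y) p.2) := by
  have hjoint : DifferentiableAt ℝ (fun q : ℝ × ℝ => u q.1 q.2) (p.1, p.2) :=
    (hu.smooth.contDiffAt (hu.isOpen.mem_nhds hp)).differentiableAt one_ne_zero
  have hslice : DifferentiableAt ℝ (fun y => u p.1 y) p.2 :=
    hjoint.comp p.2 ((differentiableAt_const p.1).prodMk differentiableAt_id)
  have hbcoef := (contDiffAt_bcoef (hu.small p hp) i).differentiableAt (by simp)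
  exact (hbcoef.hasFDerivAt.comp_hasDerivAt p.2 hslice.hasDerivAt).deriv

end Smoothness

section Eigencoordinates

variable {n : ℕ} {S : HypSys n}

variable (S) in
/-- The coordinates `(l_1(u) x, …, l_n(u) x)` of `x` in the eigenbasis `r_1(u), …, r_n(u)`; thus
`v = eigenCoord u u` and `w = eigenCoord u u_x`. -/
def eigenCoord (u x : V n) : V n := fun k => S.l k u ⬝ᵥ x

theorem sum_eigenCoord_smul_r {u : V n} (hu : eunorm u < S.δ) (x : V n) :
    ∑ k, S.eigenCoord u x k • S.r k u = x := by
  let L : Matrix (Fin n) (Fin n) ℝ := .of fun i => S.l i u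
  let R : Matrix (Fin n) (Fin n) ℝ := (.of fun j => S.r j u)ᵀ
  have hLR : L * R = 1 := by
    ext i j
    exact (S.norm_lr u hu i j).trans (Matrix.one_apply ..).symm
  calc ∑ k, S.eigenCoord u x k • S.r k u = R *ᵥ (L *ᵥ x) := by
        ext m
        simp only [R, mulVec, dotProduct, transpose_apply, of_apply, Finset.sum_apply,
          Pi.smul_apply, smul_eq_mul, mul_comm (S.r _ u m)]
        rfl
    _ = x := by rw [mulVec_mulVec, mul_eq_one_comm.1 hLR, one_mulVec]

theorem tendsto_eigenCoord_self : Tendsto (fun u => S.eigenCoord u u) (𝓝 0) (𝓝 0) := by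
  have h : ContDiffAt ℝ ∞ (fun u => S.eigenCoord u u) 0 := contDiffAt_pi.2 fun k =>
    contDiffAt_dotProduct (contDiffAt_l S.eunorm_zero_lt k) contDiffAt_id
  have h0 : S.eigenCoord 0 0 = 0 := funext fun k => dotProduct_zero _
  simpa only [h0] using h.continuousAt.tendsto

theorem eigenCoord_self_isBigO_one (j : Fin n) :
    (fun u => S.eigenCoord u u j) =O[𝓝 0] fun _ => (1 : ℝ) :=
  ((tendsto_apply_zero j).comp tendsto_eigenCoord_self).isBigO_one ℝ

theorem id_isBigO_eigenCoord : (fun u : V n => u) =O[𝓝 0] fun u => S.eigenCoord u u := by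
  refine (isBigO_sum_smul (c := fun u => S.eigenCoord u u) fun k =>
    (contDiffAt_r S.eunorm_zero_lt k).continuousAt.tendsto.isBigO_one ℝ).congr' ?_ .rfl
  filter_upwards [S.domain_mem_nhds S.eunorm_zero_lt] with u hu
  exact sum_eigenCoord_smul_r hu u

theorem Normalized.eventually_r_axis (hNorm : S.Normalized) (j : Fin n) :
    ∀ᶠ s : ℝ in 𝓝 0, S.r j (s • eb j) = eb j :=
  S.eventually_abs_lt.mono (hNorm j)

theorem offAxis_sub_isBigO_offAxis_eigenCoord (j : Fin n) :
    (fun u => offAxis j u - S.eigenCoord u u j • offAxis j (S.r j u)) =O[𝓝 0]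
      fun u => offAxis j (S.eigenCoord u u) := by
  have hr : ∀ k, (fun u => offAxis j (S.r k u)) =O[𝓝 0] fun _ => (1 : ℝ) := fun k =>
    ((offAxis j).continuous.continuousAt.comp
      (contDiffAt_r S.eunorm_zero_lt k).continuousAt).tendsto.isBigO_one ℝ
  refine (isBigO_sum_smul (c := fun u => offAxis j (S.eigenCoord u u)) hr).congr' ?_ .rfl
  filter_upwards [S.domain_mem_nhds S.eunorm_zero_lt] with u hu
  have hj : ∑ k, (S.eigenCoord u u j • eb j : V n) k • offAxis j (S.r k u) =
      S.eigenCoord u u j • offAxis j (S.r j u) := by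
    simp [eb, Pi.single_apply, ite_smul]
  calc ∑ k, offAxis j (S.eigenCoord u u) k • offAxis j (S.r k u)
    _ = offAxis j (∑ k, S.eigenCoord u u k • S.r k u) -
          S.eigenCoord u u j • offAxis j (S.r j u) := by
      simp only [offAxis_apply j (S.eigenCoord u u), Pi.sub_apply, sub_smul,
        Finset.sum_sub_distrib, hj, map_sum, map_smul]
    _ = offAxis j u - S.eigenCoord u u j • offAxis j (S.r j u) := by
      rw [sum_eigenCoord_smul_r hu u]

theorem Normalized.offAxis_isBigO_eigenCoord (hNorm : S.Normalized) (j : Fin n) :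
    offAxis j =O[𝓝 0] fun u => offAxis j (S.eigenCoord u u) := by
  have hr : (fun u => offAxis j (S.r j u)) =O[𝓝 0] offAxis j := by
    refine isBigO_offAxis_of_axis_eq_zero ((offAxis j).contDiff.contDiffAt.comp 0
      ((contDiffAt_r S.eunorm_zero_lt j).of_le (by simp))) ?_
    filter_upwards [hNorm.eventually_r_axis j] with s hs
    simp only [hs, offAxis_eb]
  have hsmall : (fun u => S.eigenCoord u u j • offAxis j (S.r j u)) =o[𝓝 0] offAxis j := by
    simpa using ((isLittleO_one_iff ℝ).2
      ((tendsto_apply_zero j).comp (tendsto_eigenCoord_self (S := S)))).smul_isBigO hr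
  -- `offAxis j (r_j u)` is itself `O(offAxis j u)` and `v_j → 0`, so this term is absorbed.
  exact hsmall.right_isBigO_sub.trans (offAxis_sub_isBigO_offAxis_eigenCoord j)

end Eigencoordinates
section Coefficients

variable {n : ℕ} {S : HypSys n}

theorem Matching.eventually_bcoef_axis (hMatch : S.Matching) (i j : Fin n) :
    ∀ᶠ s : ℝ in 𝓝 0, S.bcoef i (s • eb j) = 0 := by
  filter_upwards [S.eventually_abs_lt] with s hs
  simp [bcoef, hMatch j s hs]

theorem Normalized.bcoef_isBigO (hNorm : S.Normalized) (hMatch : S.Matching) (i : Fin n) :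
    S.bcoef i =O[𝓝 0] fun u => offDiagSum (S.eigenCoord u u) (S.eigenCoord u u) := by
  have : Nonempty (Fin n) := ⟨i⟩
  have hquad : ∀ j, S.bcoef i =O[𝓝 0] fun u =>
      ‖S.eigenCoord u u‖ * ‖offAxis j (S.eigenCoord u u)‖ := fun j =>
    (isBigO_norm_mul_offAxis_of_axis_eq_zero
      ((contDiffAt_bcoef S.eunorm_zero_lt i).of_le (WithTop.coe_le_coe.2 le_top))
      (hMatch.eventually_bcoef_axis i) j).trans
      (id_isBigO_eigenCoord.norm_norm.mul (hNorm.offAxis_isBigO_eigenCoord j).norm_norm)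
  refine isBigO_of_forall_isBigO_of_exists_norm_le hquad fun u => ?_
  obtain ⟨j, hj⟩ := exists_norm_mul_norm_offAxis_le_offDiagSum (S.eigenCoord u u)
  exact ⟨j, by simpa [abs_of_nonneg (offDiagSum_nonneg _ _)] using hj⟩

theorem Normalized.eventually_fderiv_axis_eq_zero {E : Type*} [NormedAddCommGroup E]
    [NormedSpace ℝ E] {f : V n → E} {c : E} {j : Fin n} (hNorm : S.Normalized)
    (hf : ContDiffAt ℝ ∞ f 0) (hc : ∀ᶠ s : ℝ in 𝓝 0, f (s • eb j) = c) :
    ∀ᶠ s : ℝ in 𝓝 0, fderiv ℝ f (s • eb j) (S.r j (s • eb j)) = 0 := by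
  filter_upwards [fderiv_apply_eventually_eq_zero (hf.of_le (by simp)) hc,
    hNorm.eventually_r_axis j] with s hs hr
  rw [hr, hs]

theorem Normalized.betaT_diag_isBigO_offAxis (hNorm : S.Normalized) {i j : Fin n} (hij : i ≠ j) :
    S.betaT i j j =O[𝓝 0] offAxis j := by
  refine isBigO_offAxis_of_axis_eq_zero
    ((contDiffAt_betaT S.eunorm_zero_lt i j j).of_le (by simp)) ?_
  filter_upwards [hNorm.eventually_fderiv_axis_eq_zero (contDiffAt_r S.eunorm_zero_lt j)
    (hNorm.eventually_r_axis j)] with s hs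
  simp [betaT, beta, hij, hs]

theorem Normalized.sum_sigma_mul_bcoef_add_fderiv_isBigO_offAxis (hNorm : S.Normalized)
    (hMatch : S.Matching) (i j : Fin n) :
    (fun u => (∑ k, S.sigma i j k u * S.bcoef k u) + fderiv ℝ (S.bcoef i) u (S.r j u))
      =O[𝓝 0] offAxis j := by
  have h0 := S.eunorm_zero_lt
  refine isBigO_offAxis_of_axis_eq_zero (((ContDiffAt.sum fun k _ =>
    (contDiffAt_sigma h0 i j k).mul (contDiffAt_bcoef h0 k)).add
    (contDiffAt_fderiv_bcoef h0 i j)).of_le (m := 1) (by simp)) ?_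
  filter_upwards [hNorm.eventually_fderiv_axis_eq_zero (contDiffAt_bcoef h0 i)
      (hMatch.eventually_bcoef_axis i j),
    eventually_all.2 fun k => hMatch.eventually_bcoef_axis k j] with s hs hb
  simp [hs, hb]

theorem gammaT_diag (i j : Fin n) (u : V n) : S.gammaT i j j u = 0 := by
  simp only [gammaT, gamma]
  ring

theorem betaT_self (i : Fin n) (u : V n) : S.betaT i i i u = fderiv ℝ (S.lam i) u (S.r i u) := by
  simp [betaT, beta]

theorem WLD.axisDeriv_eq_zero {i : Fin n} (h : S.WLD i) {k : ℕ} (hk : k ≠ 0) :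
    S.axisDeriv i k = 0 := by
  have hconst : (fun s : ℝ => S.lam i (s • eb i)) =ᶠ[𝓝 0] fun _ => S.lam i 0 :=
    S.eventually_abs_lt.mono h
  rw [axisDeriv, hconst.iteratedDeriv_eq, iteratedDeriv_const, if_neg hk]

theorem IsMinAlpha.axisDeriv_eq_zero {a : ℕ} (h : S.IsMinAlpha a) (i : Fin n) {k : ℕ}
    (hk : 1 ≤ k) (hka : k ≤ a) : S.axisDeriv i k = 0 := by
  by_cases hW : S.WLD i
  · exact hW.axisDeriv_eq_zero (Nat.one_le_iff_ne_zero.1 hk)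
  induction k using Nat.strong_induction_on with
  | _ k ih =>
    by_contra hne
    have hα : S.IsAlphaOf i (k - 1) :=
      ⟨fun m hm hmk => ih m (by omega) hm (by omega), by rwa [Nat.sub_add_cancel hk]⟩
    have := h.2 i hW (k - 1) hα
    omega

theorem Normalized.betaT_self_axis_isBigO (hNorm : S.Normalized) {i : Fin n} {a : ℕ}
    (ha : ∀ k, 1 ≤ k → k ≤ a → S.axisDeriv i k = 0) :
    (fun u : V n => S.betaT i i i (u i • eb i)) =O[𝓝 0] fun u => u i ^ a := by
  have hsmooth : ContDiffAt ℝ a (fun s : ℝ => S.betaT i i i (s • eb i)) 0 := by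
    refine (ContDiffAt.comp (g := S.betaT i i i) (0 : ℝ) ?_
      (contDiffAt_id.smul contDiffAt_const)).of_le (m := a) (n := ∞) (WithTop.coe_le_coe.2 le_top)
    simpa using contDiffAt_betaT S.eunorm_zero_lt i i i
  have hderiv : (fun s : ℝ => S.betaT i i i (s • eb i)) =ᶠ[𝓝 0]
      deriv fun s : ℝ => S.lam i (s • eb i) := by
    filter_upwards [hNorm.eventually_r_axis i, (tendsto_smul_const_zero (eb i)).eventually
      (eventually_differentiableAt_of_contDiffAt
        ((contDiffAt_lam S.eunorm_zero_lt i).of_le (by simp)))] with s hr hdiff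
    rw [betaT_self, hr, fderiv_apply_eq_deriv_smul hdiff]
  have hzero : ∀ k < a, iteratedDeriv k (fun s : ℝ => S.betaT i i i (s • eb i)) 0 = 0 :=
    fun k hk => by
      rw [hderiv.iteratedDeriv_eq, ← iteratedDeriv_succ']
      exact ha (k + 1) (by omega) hk
  simpa [Function.comp_def] using
    (isBigO_sub_pow_of_iteratedDeriv_eq_zero hsmooth hzero).comp_tendsto
    (tendsto_apply_zero i)

end Coefficients

section SourceTerms

variable {n : ℕ} {S : HypSys n}

variable (S) in
/-- The source term `F̃_i` at state `u` and slope `p = u_x`. -/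
def sourceF (i : Fin n) (u p : V n) : ℝ :=
  (∑ j, ∑ k, S.betaT i j k u * S.eigenCoord u u j * S.eigenCoord u p k) +
    (∑ j, ∑ k, S.nu i j k u * S.eigenCoord u u j * S.bcoef k u) + S.bcoef i u

variable (S) in
/-- The source term `G̃_i` at state `u` and slope `p = u_x`, with `(b_i(u))_x` expanded by the
chain rule. -/
def sourceG (i : Fin n) (u p : V n) : ℝ :=
  (∑ j, ∑ k, S.gammaT i j k u * S.eigenCoord u p j * S.eigenCoord u p k) +
    (∑ j, ∑ k, S.sigma i j k u * S.eigenCoord u p j * S.bcoef k u) + fderiv ℝ (S.bcoef i) u p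

theorem Normalized.offAxis_mul_isBigO (hNorm : S.Normalized) {c : V n → ℝ} {j : Fin n}
    (hc : c =O[𝓝 0] offAxis j) :
    (fun q : V n × V n => c q.1 * S.eigenCoord q.1 q.2 j) =O[𝓝 0 ×ˢ ⊤]
      fun q => offDiagSum (S.eigenCoord q.1 q.1) (S.eigenCoord q.1 q.2) :=
  isBigO_offDiagSum_of_isBigO_offAxis
    ((hc.trans (hNorm.offAxis_isBigO_eigenCoord j)).comp_tendsto tendsto_fst)

theorem Normalized.offAxis_mul_mul_isBigO (hNorm : S.Normalized) {c : V n → ℝ} {j : Fin n}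
    (hc : c =O[𝓝 0] offAxis j) :
    (fun q : V n × V n => c q.1 * S.eigenCoord q.1 q.1 j * S.eigenCoord q.1 q.2 j) =O[𝓝 0 ×ˢ ⊤]
      fun q => offDiagSum (S.eigenCoord q.1 q.1) (S.eigenCoord q.1 q.2) :=
  hNorm.offAxis_mul_isBigO (c := fun u => c u * S.eigenCoord u u j) <| by
    simpa using (hc.norm_right.mul (eigenCoord_self_isBigO_one j)).norm_right

theorem Normalized.betaT_self_mul_mul_isBigO (hNorm : S.Normalized) {i : Fin n} {a : ℕ}
    (ha : ∀ k, 1 ≤ k → k ≤ a → S.axisDeriv i k = 0) :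
    (fun q : V n × V n => S.betaT i i i q.1 * S.eigenCoord q.1 q.1 i * S.eigenCoord q.1 q.2 i)
      =O[𝓝 0 ×ˢ ⊤] fun q => offDiagSum (S.eigenCoord q.1 q.1) (S.eigenCoord q.1 q.2) +
        |q.1 i| ^ a * |S.eigenCoord q.1 q.1 i * S.eigenCoord q.1 q.2 i| := by
  have hoff := hNorm.offAxis_mul_mul_isBigO (isBigO_sub_axis
    ((contDiffAt_betaT S.eunorm_zero_lt i i i).of_le (by simp)) i)
  have haxis := ((hNorm.betaT_self_axis_isBigO ha).comp_tendsto (tendsto_fst (g := ⊤))).mul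
    (isBigO_refl (fun q : V n × V n => S.eigenCoord q.1 q.1 i * S.eigenCoord q.1 q.2 i) _)
  refine (isBigO_add_of_nonneg hoff haxis.norm_right (fun q => offDiagSum_nonneg _ _)
    (fun q => norm_nonneg _)).congr (fun q => ?_) (fun q => ?_)
  · simp only [Function.comp_apply]
    ring
  · simp [abs_mul]

theorem Normalized.sum_betaT_mul_mul_isBigO (hNorm : S.Normalized) {i : Fin n} {a : ℕ}
    (ha : ∀ k, 1 ≤ k → k ≤ a → S.axisDeriv i k = 0) :
    (fun q : V n × V n => ∑ j, ∑ k,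
        S.betaT i j k q.1 * S.eigenCoord q.1 q.1 j * S.eigenCoord q.1 q.2 k)
      =O[𝓝 0 ×ˢ ⊤] fun q => offDiagSum (S.eigenCoord q.1 q.1) (S.eigenCoord q.1 q.2) +
        |q.1 i| ^ a * |S.eigenCoord q.1 q.1 i * S.eigenCoord q.1 q.2 i| := by
  refine IsBigO.fun_sum fun j _ => IsBigO.fun_sum fun k _ => ?_
  by_cases hdiag : i = j ∧ j = k
  · obtain ⟨rfl, rfl⟩ := hdiag
    exact hNorm.betaT_self_mul_mul_isBigO ha
  suffices h : (fun q : V n × V n =>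
      S.betaT i j k q.1 * S.eigenCoord q.1 q.1 j * S.eigenCoord q.1 q.2 k) =O[𝓝 0 ×ˢ ⊤]
      fun q => offDiagSum (S.eigenCoord q.1 q.1) (S.eigenCoord q.1 q.2) by
    simpa using isBigO_add_of_nonneg h (isBigO_zero _ _) (fun q => offDiagSum_nonneg _ _)
      (fun q => by positivity)
  rcases eq_or_ne j k with rfl | hjk
  · exact hNorm.offAxis_mul_mul_isBigO
      (hNorm.betaT_diag_isBigO_offAxis fun hij => hdiag ⟨hij, rfl⟩)
  · exact isBigO_offDiagSum_of_ne
      (isBigO_one_comp_fst (contDiffAt_betaT S.eunorm_zero_lt i j k).continuousAt ⊤) hjk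

theorem Normalized.sum_nu_mul_bcoef_add_bcoef_isBigO (hNorm : S.Normalized) (hMatch : S.Matching)
    (i : Fin n) :
    (fun u => (∑ j, ∑ k, S.nu i j k u * S.eigenCoord u u j * S.bcoef k u) + S.bcoef i u)
      =O[𝓝 0] fun u => offDiagSum (S.eigenCoord u u) (S.eigenCoord u u) := by
  refine IsBigO.add (IsBigO.fun_sum fun j _ => IsBigO.fun_sum fun k _ => ?_)
    (hNorm.bcoef_isBigO hMatch i)
  have hnu : S.nu i j k =O[𝓝 0] fun _ => (1 : ℝ) :=
    (contDiffAt_nu S.eunorm_zero_lt i j k).continuousAt.tendsto.isBigO_one ℝ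
  simpa using (hnu.mul (eigenCoord_self_isBigO_one j)).mul (hNorm.bcoef_isBigO hMatch k)

theorem Normalized.sourceF_isBigO (hNorm : S.Normalized) (hMatch : S.Matching) {i : Fin n} {a : ℕ}
    (ha : ∀ k, 1 ≤ k → k ≤ a → S.axisDeriv i k = 0) :
    (fun q : V n × V n => S.sourceF i q.1 q.2) =O[𝓝 0 ×ˢ ⊤] fun q =>
      offDiagSum (S.eigenCoord q.1 q.1) (S.eigenCoord q.1 q.2) +
        offDiagSum (S.eigenCoord q.1 q.1) (S.eigenCoord q.1 q.1) +
        |q.1 i| ^ a * |S.eigenCoord q.1 q.1 i * S.eigenCoord q.1 q.2 i| := by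
  refine (isBigO_add_of_nonneg (hNorm.sum_betaT_mul_mul_isBigO ha)
    ((hNorm.sum_nu_mul_bcoef_add_bcoef_isBigO hMatch i).comp_tendsto tendsto_fst)
    (fun q => add_nonneg (offDiagSum_nonneg _ _) (by positivity))
    (fun q => offDiagSum_nonneg _ _)).congr (fun q => ?_) (fun q => add_right_comm _ _ _)
  simp only [sourceF, Function.comp_apply, add_assoc]

theorem sum_gammaT_mul_mul_isBigO (i : Fin n) :
    (fun q : V n × V n => ∑ j, ∑ k,
        S.gammaT i j k q.1 * S.eigenCoord q.1 q.2 j * S.eigenCoord q.1 q.2 k)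
      =O[𝓝 0 ×ˢ ⊤] fun q => offDiagSum (S.eigenCoord q.1 q.2) (S.eigenCoord q.1 q.2) := by
  refine IsBigO.fun_sum fun j _ => IsBigO.fun_sum fun k _ => ?_
  rcases eq_or_ne j k with rfl | hjk
  · simpa only [gammaT_diag, zero_mul] using isBigO_zero _ _
  · exact isBigO_offDiagSum_of_ne
      (isBigO_one_comp_fst (contDiffAt_gammaT S.eunorm_zero_lt i j k).continuousAt ⊤) hjk

theorem sum_sigma_mul_bcoef_add_fderiv_bcoef {u : V n} (hu : eunorm u < S.δ) (i : Fin n)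
    (p : V n) :
    (∑ j, ∑ k, S.sigma i j k u * S.eigenCoord u p j * S.bcoef k u) + fderiv ℝ (S.bcoef i) u p =
      ∑ j, ((∑ k, S.sigma i j k u * S.bcoef k u) + fderiv ℝ (S.bcoef i) u (S.r j u)) *
        S.eigenCoord u p j := by
  have hfderiv : fderiv ℝ (S.bcoef i) u p =
      ∑ j, fderiv ℝ (S.bcoef i) u (S.r j u) * S.eigenCoord u p j := by
    conv_lhs => rw [← sum_eigenCoord_smul_r hu p]
    simp only [map_sum, map_smul, smul_eq_mul, mul_comm]
  simp only [hfderiv, add_mul, Finset.sum_add_distrib, Finset.sum_mul, mul_right_comm]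

theorem Normalized.sourceG_isBigO (hNorm : S.Normalized) (hMatch : S.Matching) (i : Fin n) :
    (fun q : V n × V n => S.sourceG i q.1 q.2) =O[𝓝 0 ×ˢ ⊤] fun q =>
      offDiagSum (S.eigenCoord q.1 q.1) (S.eigenCoord q.1 q.2) +
        offDiagSum (S.eigenCoord q.1 q.2) (S.eigenCoord q.1 q.2) := by
  have hbcoef : (fun q : V n × V n => ∑ j, ((∑ k, S.sigma i j k q.1 * S.bcoef k q.1) +
      fderiv ℝ (S.bcoef i) q.1 (S.r j q.1)) * S.eigenCoord q.1 q.2 j) =O[𝓝 0 ×ˢ ⊤]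
      fun q => offDiagSum (S.eigenCoord q.1 q.1) (S.eigenCoord q.1 q.2) :=
    IsBigO.fun_sum fun j _ => hNorm.offAxis_mul_isBigO
      (hNorm.sum_sigma_mul_bcoef_add_fderiv_isBigO_offAxis hMatch i j)
  refine (isBigO_add_of_nonneg hbcoef (sum_gammaT_mul_mul_isBigO i)
    (fun q => offDiagSum_nonneg _ _) (fun q => offDiagSum_nonneg _ _)).congr' ?_ .rfl
  filter_upwards [Eventually.prod_inl (S.domain_mem_nhds S.eunorm_zero_lt) ⊤] with q hq
  rw [← sum_sigma_mul_bcoef_add_fderiv_bcoef hq, sourceG]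
  ring

end SourceTerms

end HypSys

theorem stmt17_general {n : ℕ} (S : HypSys n) (hNorm : S.Normalized) (hMatch : S.Matching)
    (a : Fin n → ℕ) (ha : ∀ i k, 1 ≤ k → k ≤ a i → S.axisDeriv i k = 0) :
    ∃ δ' : ℝ, 0 < δ' ∧ δ' ≤ S.δ ∧ ∃ C > (0 : ℝ), ∀ u p : V n, eunorm u < δ' → ∀ i : Fin n,
      |S.sourceF i u p| ≤ C * (offDiagSum (S.eigenCoord u u) (S.eigenCoord u p) +
        offDiagSum (S.eigenCoord u u) (S.eigenCoord u u) +
        |u i| ^ a i * |S.eigenCoord u u i * S.eigenCoord u p i|) ∧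
      |S.sourceG i u p| ≤ C * (offDiagSum (S.eigenCoord u u) (S.eigenCoord u p) +
        offDiagSum (S.eigenCoord u p) (S.eigenCoord u p)) := by
  obtain ⟨C, ⟨hF, hG⟩, hC⟩ :=
    (((eventually_forall_norm_le_of_isBigO fun i => hNorm.sourceF_isBigO hMatch (ha i)).and
      (eventually_forall_norm_le_of_isBigO (hNorm.sourceG_isBigO hMatch))).and
      (eventually_gt_atTop 0)).exists
  obtain ⟨ε, hε, hbound⟩ :=
    exists_pos_forall_of_eventually_nhds_zero_prod_top (hF.and hG)
  refine ⟨min ε S.δ, lt_min hε S.δ_pos, min_le_right _ _, C, hC, fun u p hu i => ?_⟩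
  have h := hbound u p (hu.trans_le (min_le_left _ _))
  have hvw := offDiagSum_nonneg (S.eigenCoord u u) (S.eigenCoord u p)
  have hvv := offDiagSum_nonneg (S.eigenCoord u u) (S.eigenCoord u u)
  have hww := offDiagSum_nonneg (S.eigenCoord u p) (S.eigenCoord u p)
  have hself : 0 ≤ |u i| ^ a i * |S.eigenCoord u u i * S.eigenCoord u p i| := by positivity
  constructor
  · simpa only [Real.norm_eq_abs, abs_of_nonneg (add_nonneg (add_nonneg hvw hvv) hself)]
      using h.1 i
  · simpa only [Real.norm_eq_abs, abs_of_nonneg (add_nonneg hvw hww)] using h.2 i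

/-- **The pointwise bounds (3.3)–(3.4)** on the source terms `F̃_i`, `G̃_i` of
the divergence-form decomposition.  In normalized coordinates with the
matching condition and `α = min{α_i : i ∈ J} < ∞`, there is a constant
`C > 0` depending only on the system such that for any `C¹` solution `u` with
`|u|` small:
`|F̃_i| ≤ C [Σ_{j≠k}|v_j w_k| + Σ_{j≠k}|v_j v_k| + |u_i|^α |v_i w_i|]` and
`|G̃_i| ≤ C [Σ_{j≠k}|v_j w_k| + Σ_{j≠k}|w_j w_k|]`. -/
theorem stmt17 {n : ℕ} (S : HypSys n) (hNorm : S.Normalized) (hMatch : S.Matching)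
    (a : ℕ) (hMin : S.IsMinAlpha a) :
    ∃ δ' : ℝ, 0 < δ' ∧ δ' ≤ S.δ ∧ ∃ C > (0 : ℝ),
    ∀ u : ℝ → ℝ → V n, ∀ Ω : Set (ℝ × ℝ), S.IsSol1On u Ω →
    (∀ p ∈ Ω, eunorm (u p.1 p.2) < δ') →
    ∀ i : Fin n, ∀ p ∈ Ω,
      |(∑ j : Fin n, ∑ k : Fin n,
            S.betaT i j k (u p.1 p.2) * S.vC u j p.1 p.2 * S.wC u k p.1 p.2) +
          (∑ j : Fin n, ∑ k : Fin n,
            S.nu i j k (u p.1 p.2) * S.vC u j p.1 p.2 * S.bcoef k (u p.1 p.2)) +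
          S.bcoef i (u p.1 p.2)| ≤
        C * ((∑ j : Fin n, ∑ k : Fin n, if j = k then 0 else
                |S.vC u j p.1 p.2 * S.wC u k p.1 p.2|) +
             (∑ j : Fin n, ∑ k : Fin n, if j = k then 0 else
                |S.vC u j p.1 p.2 * S.vC u k p.1 p.2|) +
             |u p.1 p.2 i| ^ a * |S.vC u i p.1 p.2 * S.wC u i p.1 p.2|) ∧
      |(∑ j : Fin n, ∑ k : Fin n,
            S.gammaT i j k (u p.1 p.2) * S.wC u j p.1 p.2 * S.wC u k p.1 p.2) +
          (∑ j : Fin n, ∑ k : Fin n,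
            S.sigma i j k (u p.1 p.2) * S.wC u j p.1 p.2 * S.bcoef k (u p.1 p.2)) +
          deriv (fun y => S.bcoef i (u p.1 y)) p.2| ≤
        C * ((∑ j : Fin n, ∑ k : Fin n, if j = k then 0 else
                |S.vC u j p.1 p.2 * S.wC u k p.1 p.2|) +
             (∑ j : Fin n, ∑ k : Fin n, if j = k then 0 else
                |S.wC u j p.1 p.2 * S.wC u k p.1 p.2|)) := by
  obtain ⟨δ', hδ', hle, C, hC, h⟩ :=
    stmt17_general S hNorm hMatch (fun _ => a) fun i _ => hMin.axisDeriv_eq_zero i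
  exact ⟨δ', hδ', hle, C, hC, fun u Ω hu hsmall i p hp =>
    hu.deriv_bcoef i hp ▸ h _ _ (hsmall p hp) i⟩
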